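/- arXiv:2305.05522 — 2 statements merged into one kernel-verified Lean document; each statement's English description precedes it below -/
import Mathlib

section
/- Let p > 3 be a prime, a a nonnegative integer, and r, s even positive integers with (p-1) not dividing r and r ≡ s (mod p^a(p-1)). Then (1 - p^(r-1)) * B_r / r ≡ (1 - p^(s-1)) * B_s / s (mod p^(a+1)), as a congruence of p-integers (i.e., the p-adic valuation of the difference is at least a+1). -/
open Filter Topology

lemma kc_tendsto (p : ℕ) [hp : Fact p.Prime] (r : ℕ) :
    Tendsto (fun M : ℕ => (∑ k ∈ Finset.range (p ^ M), (k : ℚ_[p]) ^ r) / (p : ℚ_[p]) ^ M) atTop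
      (𝓝 ((bernoulli r : ℚ) : ℚ_[p])) := by
  have hp0 : (p : ℚ_[p]) ≠ 0 := by exact_mod_cast hp.out.ne_zero
  have h0 : Tendsto (fun M : ℕ => (p : ℚ_[p]) ^ M) atTop (𝓝 0) :=
    tendsto_pow_atTop_nhds_zero_of_norm_lt_one (Padic.norm_p_lt_one)
  let F : ℚ_[p] → ℚ_[p] := fun x => ∑ i ∈ Finset.range (r + 1),
    ((bernoulli i : ℚ) : ℚ_[p]) * ((r + 1).choose i) * x ^ (r - i) / (r + 1)
  have hF : Continuous F := by fun_prop
  have hF0 : F 0 = ((bernoulli r : ℚ) : ℚ_[p]) := by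
    have : ((r : ℚ_[p]) + 1) ≠ 0 := by exact_mod_cast r.succ_ne_zero
    simp only [F]
    rw [Finset.sum_range_succ, Finset.sum_eq_zero]
    · simp; field_simp
    · intro i hi
      have : r - i ≠ 0 := by have := Finset.mem_range.1 hi; omega
      simp [this]
  have := (hF.tendsto 0).comp h0
  rw [hF0] at this
  refine this.congr fun M => ?_
  have h := congrArg (fun q : ℚ => (q : ℚ_[p])) (sum_range_pow (p ^ M) r)
  push_cast at h
  simp only [Function.comp, F]
  rw [h, Finset.sum_div]
  refine Finset.sum_congr rfl fun i hi => ?_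
  have : r + 1 - i = (r - i) + 1 := by have := Finset.mem_range.1 hi; omega
  rw [this, pow_succ]
  field_simp

lemma kc_split (p : ℕ) (hp : p.Prime) (r M : ℕ) :
    (∑ k ∈ (Finset.range (p ^ (M + 1))).filter (fun k => ¬ p ∣ k), k ^ r)
      + p ^ r * ∑ k ∈ Finset.range (p ^ M), k ^ r = ∑ k ∈ Finset.range (p ^ (M + 1)), k ^ r := by
  rw [← Finset.sum_filter_add_sum_filter_not (Finset.range (p ^ (M + 1))) (fun k => p ∣ k), add_comm]
  congr 1
  rw [Finset.mul_sum]
  refine Finset.sum_bij (fun k _ => p * k) ?_ ?_ ?_ ?_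
  · intro k hk
    simp only [Finset.mem_filter, Finset.mem_range] at *
    refine ⟨?_, dvd_mul_right _ _⟩
    rw [pow_succ, mul_comm]
    exact Nat.mul_lt_mul_of_pos_right hk hp.pos
  · intro x _ y _ h
    exact Nat.eq_of_mul_eq_mul_left hp.pos h
  · intro b hb
    simp only [Finset.mem_filter, Finset.mem_range] at hb
    obtain ⟨h1, k, rfl⟩ := hb
    refine ⟨k, ?_, rfl⟩
    rw [Finset.mem_range]
    rw [pow_succ, mul_comm] at h1
    exact Nat.lt_of_mul_lt_mul_right h1
  · intro k _
    rw [mul_pow]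

lemma kc_binom (x h : ℤ) (r : ℕ) (hr : 0 < r) :
    h ^ 2 ∣ x ^ r - (x - h) ^ r - r * h * x ^ (r - 1) := by
  obtain ⟨n, rfl⟩ : ∃ n, r = n + 1 := ⟨r - 1, by omega⟩
  clear hr
  induction n with
  | zero => simp
  | succ n ih =>
    obtain ⟨d, hd⟩ := ih
    simp only [Nat.add_sub_cancel] at hd ⊢
    have : (x - h) ^ (n + 1) = x ^ (n + 1) - ((n + 1 : ℕ) : ℤ) * h * x ^ n - h ^ 2 * d := by
      linarith
    refine ⟨d * (x - h) - (n + 1) * x ^ n, ?_⟩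
    rw [pow_succ (x - h) (n + 1), this]
    push_cast
    ring

lemma kc_perm (p : ℕ) (hp : p.Prime) (c : ℕ) (hc : ¬ p ∣ c) (M r : ℕ) :
    ∑ k ∈ (Finset.range (p ^ (M + 1))).filter (fun k => ¬ p ∣ k), (((c * k % p ^ (M + 1) : ℕ) : ℤ)) ^ r
    = ∑ k ∈ (Finset.range (p ^ (M + 1))).filter (fun k => ¬ p ∣ k), (k : ℤ) ^ r := by
  set A := (Finset.range (p ^ (M + 1))).filter (fun k => ¬ p ∣ k) with hA
  have hmaps : ∀ k ∈ A, c * k % p ^ (M + 1) ∈ A := by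
    intro k hk
    simp only [hA, Finset.mem_filter, Finset.mem_range] at *
    refine ⟨Nat.mod_lt _ (pow_pos hp.pos _), ?_⟩
    rw [Nat.dvd_mod_iff (dvd_pow_self p (Nat.succ_ne_zero M))]
    intro h
    rcases hp.dvd_mul.1 h with h | h
    · exact hc h
    · exact hk.2 h
  have hinj : Set.InjOn (fun k => c * k % p ^ (M + 1)) (A : Set ℕ) := by
    intro x hx y hy h
    simp only [hA, Finset.coe_filter, Finset.mem_range, Set.mem_ofPred_eq] at hx hy
    have h' : c * x ≡ c * y [MOD p ^ (M + 1)] := h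
    have hcop : Nat.gcd (p ^ (M + 1)) c = 1 :=
      Nat.Coprime.pow_left _ ((Nat.Prime.coprime_iff_not_dvd hp).2 hc)
    exact (Nat.ModEq.cancel_left_of_coprime hcop h').eq_of_lt_of_lt hx.1 hy.1
  have himg : A.image (fun k => c * k % p ^ (M + 1)) = A := by
    apply Finset.eq_of_subset_of_card_le
    · intro y hy
      obtain ⟨x, hx, rfl⟩ := Finset.mem_image.1 hy
      exact hmaps x hx
    · rw [Finset.card_image_of_injOn hinj]
  conv_rhs => rw [← himg]
  rw [Finset.sum_image hinj]

/-- the Voronoi sum -/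
def kcT (p c r M : ℕ) : ℤ :=
  ∑ k ∈ (Finset.range (p ^ (M + 1))).filter (fun k => ¬ p ∣ k),
    ((c * k / p ^ (M + 1) : ℕ) : ℤ) * ((c : ℤ) * k) ^ (r - 1)

lemma kc_voronoi (p : ℕ) (hp : p.Prime) (c : ℕ) (hc : ¬ p ∣ c) (M r : ℕ) (hr : 0 < r) :
    ((p : ℤ) ^ (M + 1)) ^ 2 ∣ ((c : ℤ) ^ r - 1) *
      (∑ k ∈ (Finset.range (p ^ (M + 1))).filter (fun k => ¬ p ∣ k), (k : ℤ) ^ r)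
      - r * (p : ℤ) ^ (M + 1) * kcT p c r M := by
  rw [sub_mul, one_mul]
  conv => 
    rhs; lhs; rhs
    rw [← kc_perm p hp c hc]
  rw [kcT, Finset.mul_sum, Finset.mul_sum, ← Finset.sum_sub_distrib, ← Finset.sum_sub_distrib]
  refine Finset.dvd_sum fun k _ => ?_
  have h := kc_binom ((c : ℤ) * k) ((p : ℤ) ^ (M + 1) * ((c * k / p ^ (M + 1) : ℕ) : ℤ)) r hr
  have h2 : (((c * k % p ^ (M + 1) : ℕ) : ℤ)) =
     (c : ℤ) * k - ((p : ℤ) ^ (M + 1) * ((c * k / p ^ (M + 1) : ℕ) : ℤ)) := by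
    have := Nat.mod_add_div (c * k) (p ^ (M + 1))
    have h3 := congrArg (fun n : ℕ => (n : ℤ)) this
    simp only [Nat.cast_add, Nat.cast_mul, Nat.cast_pow] at h3
    linarith
  rw [h2]
  rw [mul_pow _ _ 2] at h
  refine (dvd_of_mul_right_dvd h).trans (dvd_of_eq ?_)
  ring

lemma kc_euler (p : ℕ) (hp : p.Prime) (a r s : ℕ) (x : ℕ) (hx : ¬ p ∣ x)
    (hrs : r ≤ s) (h : p ^ a * (p - 1) ∣ s - r) : (p : ℤ) ^ (a + 1) ∣ (x : ℤ) ^ s - (x : ℤ) ^ r := by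
  obtain ⟨d, hd⟩ := h
  have hs : s = r + p ^ a * (p - 1) * d := by omega
  have hcop : Nat.Coprime x (p ^ (a + 1)) :=
    (((Nat.Prime.coprime_iff_not_dvd hp).2 hx).symm).pow_right _
  have h1 : x ^ (p ^ a * (p - 1)) ≡ 1 [MOD p ^ (a + 1)] := by
    rw [← Nat.totient_prime_pow_succ hp]
    exact Nat.ModEq.pow_totient hcop
  have h2 := (h1.pow d).mul_left (x ^ r)
  rw [one_pow, mul_one, ← pow_mul, ← pow_add, ← hs] at h2
  have := h2.symm.dvd
  push_cast at this
  exact this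

lemma kcT_congr (p : ℕ) (hp : p.Prime) (c : ℕ) (hc : ¬ p ∣ c) (a r s M : ℕ) (hr : 0 < r)
    (hrs : r ≤ s) (h : p ^ a * (p - 1) ∣ s - r) :
    (p : ℤ) ^ (a + 1) ∣ kcT p c s M - kcT p c r M := by
  rw [kcT, kcT, ← Finset.sum_sub_distrib]
  refine Finset.dvd_sum fun k hk => ?_
  rw [← mul_sub]
  rw [← Nat.cast_mul c k]
  refine Dvd.dvd.mul_left (kc_euler p hp a (r - 1) (s - 1) _ ?_ (by omega) ?_) _
  · simp only [Finset.mem_filter] at hk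
    intro h
    rcases hp.dvd_mul.1 h with h | h
    · exact hc h
    · exact hk.2 h
  · have : s - 1 - (r - 1) = s - r := by omega
    rwa [this]

lemma kc_exists (p : ℕ) [hp : Fact p.Prime] (r : ℕ) (h : ¬ (p - 1) ∣ r) :
    ∃ c : ℕ, ¬ p ∣ c ∧ ¬ (p : ℤ) ∣ (c : ℤ) ^ r - 1 := by
  by_contra! hcon
  apply h
  have h1 : Monoid.exponent (ZMod p)ˣ = p - 1 := by
    rw [IsCyclic.exponent_eq_card, Nat.card_eq_fintype_card, ZMod.card_units]
  rw [← h1]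
  refine Monoid.exponent_dvd_of_forall_pow_eq_one fun u => ?_
  have hv : ((u : ZMod p).val : ZMod p) = u := ZMod.natCast_zmod_val _
  have := hcon (u : ZMod p).val (by
    intro hd
    rw [← ZMod.natCast_eq_zero_iff, hv] at hd
    exact u.ne_zero hd)
  rw [← ZMod.intCast_zmod_eq_zero_iff_dvd] at this
  push_cast at this
  rw [hv] at this
  ext
  push_cast
  exact sub_eq_zero.1 this

noncomputable def kcX (p r : ℕ) : ℚ := (1 - (p : ℚ) ^ (r - 1)) * bernoulli r / r

lemma kc_limit (p : ℕ) [hp : Fact p.Prime] (c : ℕ) (hc : ¬ p ∣ c) (r : ℕ) (hr : 0 < r) :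
    Tendsto (fun M : ℕ => ((c : ℚ_[p]) ^ r - 1) * ((kcX p r : ℚ) : ℚ_[p]) - ((kcT p c r M : ℤ) : ℚ_[p]))
      atTop (𝓝 0) := by
  have hp0 : (p : ℚ_[p]) ≠ 0 := by exact_mod_cast hp.out.ne_zero
  have hr0 : (r : ℚ_[p]) ≠ 0 := by exact_mod_cast hr.ne'
  set S : ℕ → ℚ_[p] := fun M =>
    ∑ k ∈ (Finset.range (p ^ (M + 1))).filter (fun k => ¬ p ∣ k), (k : ℚ_[p]) ^ r with hS
  have hT : Tendsto (fun M => S M / (p : ℚ_[p]) ^ (M + 1) / r) atTop (𝓝 ((kcX p r : ℚ) : ℚ_[p])) := by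
    have h1 := kc_tendsto p r
    have h2 := h1.comp (tendsto_add_atTop_nat 1)
    have h3 := (h2.sub (h1.const_mul ((p : ℚ_[p]) ^ (r - 1)))).div_const (r : ℚ_[p])
    have e : ((kcX p r : ℚ) : ℚ_[p]) = (((bernoulli r : ℚ) : ℚ_[p]) -
       (p : ℚ_[p]) ^ (r - 1) * ((bernoulli r : ℚ) : ℚ_[p])) / r := by
      rw [kcX]; push_cast; ring
    rw [e]
    refine h3.congr fun M => ?_
    have h4 := congrArg (fun n : ℕ => (n : ℚ_[p])) (kc_split p hp.out r M)
    push_cast at h4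
    simp only [Function.comp, hS]
    rw [← h4]
    obtain ⟨n, rfl⟩ : ∃ n, r = n + 1 := ⟨r - 1, by omega⟩
    simp only [Nat.add_sub_cancel]
    field_simp
    ring
  have hE : Tendsto (fun M => ((c : ℚ_[p]) ^ r - 1) * (S M / (p : ℚ_[p]) ^ (M + 1) / r)
      - ((kcT p c r M : ℤ) : ℚ_[p])) atTop (𝓝 0) := by
    have h0 : Tendsto (fun M : ℕ => ‖(p : ℚ_[p]) ^ (M + 1) / r‖) atTop (𝓝 0) := by
      have h0 : Tendsto (fun M : ℕ => (p : ℚ_[p]) ^ M) atTop (𝓝 0) :=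
        tendsto_pow_atTop_nhds_zero_of_norm_lt_one (Padic.norm_p_lt_one)
      have := ((h0.comp (tendsto_add_atTop_nat 1)).div_const (r : ℚ_[p])).norm
      simpa using this
    refine squeeze_zero_norm (fun M => ?_) h0
    obtain ⟨d, hd⟩ := kc_voronoi p hp.out c hc M r hr
    have h4 := congrArg (fun n : ℤ => (n : ℚ_[p])) hd
    push_cast at h4
    have : ((c : ℚ_[p]) ^ r - 1) * (S M / (p : ℚ_[p]) ^ (M + 1) / r)
      - ((kcT p c r M : ℤ) : ℚ_[p]) = (p : ℚ_[p]) ^ (M + 1) / r * (d : ℚ_[p]) := by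
      simp only [hS]
      field_simp
      linear_combination h4
    rw [this, norm_mul]
    exact mul_le_of_le_one_right (norm_nonneg _) (Padic.norm_int_le_one d)
  have := (hT.const_mul ((c : ℚ_[p]) ^ r - 1)).const_sub (((c : ℚ_[p]) ^ r - 1) * ((kcX p r : ℚ) : ℚ_[p]))
  rw [sub_self] at this
  have h5 := this.add hE
  rw [add_zero] at h5
  refine h5.congr fun M => ?_
  ring

lemma kc_norm_sub {p : ℕ} [hp : Fact p.Prime] (x y : ℚ_[p]) : ‖x - y‖ ≤ max ‖x‖ ‖y‖ := by
  rw [sub_eq_add_neg, ← norm_neg y]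
  exact IsUltrametricDist.norm_add_le_max _ _

lemma kc_norm (p : ℕ) [hp : Fact p.Prime] (a r s : ℕ) (hr : 0 < r) (hnd : ¬ (p - 1) ∣ r)
    (hrs : r ≤ s) (h : p ^ a * (p - 1) ∣ s - r) :
    ‖((kcX p r - kcX p s : ℚ) : ℚ_[p])‖ ≤ (p : ℝ) ^ (-((a + 1 : ℕ) : ℤ)) := by
  obtain ⟨c, hc, hcr⟩ := kc_exists p r hnd
  have hε : (0 : ℝ) < (p : ℝ) ^ (-((a + 1 : ℕ) : ℤ)) :=
    zpow_pos (by exact_mod_cast hp.out.pos) _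
  set ε := (p : ℝ) ^ (-((a + 1 : ℕ) : ℤ)) with hεd
  have hε1 : ε ≤ 1 := zpow_le_one_of_nonpos₀ (by exact_mod_cast hp.out.one_le) (by omega)
  have e1 := (kc_limit p c hc r hr).norm.eventually (ge_mem_nhds (by simpa using hε))
  have e2 := (kc_limit p c hc s (by omega)).norm.eventually (ge_mem_nhds (by simpa using hε))
  obtain ⟨M, h1, h2⟩ := (e1.and e2).exists
  have hcrs : (p : ℤ) ^ (a + 1) ∣ (c : ℤ) ^ s - (c : ℤ) ^ r :=
    kc_euler p hp.out a r s c hc hrs h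
  have hTT := kcT_congr p hp.out c hc a r s M hr hrs h
  have hcs : ¬ (p : ℤ) ∣ (c : ℤ) ^ s - 1 := by
    intro hd
    apply hcr
    have := dvd_sub hd ((dvd_pow_self (p : ℤ) (Nat.succ_ne_zero a)).trans hcrs)
    simpa using this
  have unit : ∀ z : ℤ, ¬ (p : ℤ) ∣ z → ‖(z : ℚ_[p])‖ = 1 := by
    intro z hz
    refine le_antisymm (Padic.norm_int_le_one z) ?_
    by_contra! hlt
    exact hz (Padic.norm_intCast_lt_one_iff.1 hlt)
  have n1 := unit _ hcr
  have n2 := unit _ hcs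
  have n3 : ‖(((c : ℤ) ^ s - (c : ℤ) ^ r : ℤ) : ℚ_[p])‖ ≤ ε :=
    (Padic.norm_int_le_pow_iff_dvd _ _).2 (by exact_mod_cast hcrs)
  have n4 : ‖((kcT p c s M - kcT p c r M : ℤ) : ℚ_[p])‖ ≤ ε :=
    (Padic.norm_int_le_pow_iff_dvd _ _).2 (by exact_mod_cast hTT)
  push_cast at n1 n2 n3 n4 ⊢
  set x := ((kcX p r : ℚ) : ℚ_[p])
  set y := ((kcX p s : ℚ) : ℚ_[p])
  have ny : ‖y‖ ≤ 1 := by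
    have : ‖((c : ℚ_[p]) ^ s - 1) * y‖ ≤ 1 := by
      have e : ((c : ℚ_[p]) ^ s - 1) * y =
        (((c : ℚ_[p]) ^ s - 1) * y - (kcT p c s M : ℚ_[p])) + (kcT p c s M : ℚ_[p]) := by ring
      rw [e]
      exact (IsUltrametricDist.norm_add_le_max _ _).trans
        (max_le (h2.trans hε1) (Padic.norm_int_le_one _))
    rwa [norm_mul, n2, one_mul] at this
  have key : ‖((c : ℚ_[p]) ^ r - 1) * (x - y)‖ ≤ ε := by
    have e : ((c : ℚ_[p]) ^ r - 1) * (x - y) =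
      ((((c : ℚ_[p]) ^ r - 1) * x - (kcT p c r M : ℚ_[p])) -
       (((c : ℚ_[p]) ^ s - 1) * y - (kcT p c s M : ℚ_[p]))) +
       (((c : ℚ_[p]) ^ s - (c : ℚ_[p]) ^ r) * y - ((kcT p c s M : ℚ_[p]) - (kcT p c r M : ℚ_[p]))) := by
      ring
    rw [e]
    refine (IsUltrametricDist.norm_add_le_max _ _).trans (max_le ?_ ?_)
    · exact (kc_norm_sub _ _).trans (max_le h1 h2)
    · refine (kc_norm_sub _ _).trans (max_le ?_ n4)
      rw [norm_mul]
      exact (mul_le_of_le_one_right (norm_nonneg _) ny).trans n3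
  rwa [norm_mul, n1, one_mul] at key

theorem kummer_congruence_strong (p : ℕ) (hp : p.Prime) (hp3 : 3 < p)
    (a : ℕ) (r s : ℕ) (hr : 0 < r) (hs : 0 < s) (hre : Even r) (hse : Even s)
    (hnd : ¬ (p - 1) ∣ r) (hcong : (p : ℤ) ^ a * ((p : ℤ) - 1) ∣ (s : ℤ) - (r : ℤ)) :
    (1 - (p : ℚ) ^ (r - 1)) * bernoulli r / r = (1 - (p : ℚ) ^ (s - 1)) * bernoulli s / s ∨
    ((a + 1 : ℕ) : ℤ) ≤ padicValRat p
      ((1 - (p : ℚ) ^ (r - 1)) * bernoulli r / r - (1 - (p : ℚ) ^ (s - 1)) * bernoulli s / s) := by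
  haveI : Fact p.Prime := ⟨hp⟩
  change kcX p r = kcX p s ∨ ((a + 1 : ℕ) : ℤ) ≤ padicValRat p (kcX p r - kcX p s)
  by_cases heq : kcX p r = kcX p s
  · exact Or.inl heq
  right
  have hcast : ((p ^ a * (p - 1) : ℕ) : ℤ) = (p : ℤ) ^ a * ((p : ℤ) - 1) := by
    rw [Nat.cast_mul, Nat.cast_pow, Nat.cast_sub hp.one_le, Nat.cast_one]
  rw [← hcast] at hcong
  have hn : ‖((kcX p r - kcX p s : ℚ) : ℚ_[p])‖ ≤ (p : ℝ) ^ (-((a + 1 : ℕ) : ℤ)) := by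
    rcases le_total r s with hrs | hrs
    · refine kc_norm p a r s hr hnd hrs ?_
      rw [← Nat.cast_sub hrs] at hcong
      exact_mod_cast hcong
    · have hd : p ^ a * (p - 1) ∣ r - s := by
        rw [← dvd_neg, neg_sub, ← Nat.cast_sub hrs] at hcong
        exact_mod_cast hcong
      have hnd' : ¬ (p - 1) ∣ s := by
        intro h
        apply hnd
        have := dvd_add ((dvd_mul_left _ _).trans hd) h
        rwa [Nat.sub_add_cancel hrs] at this
      have := kc_norm p a s r hs hnd' hrs hd
      push_cast at this ⊢
      rwa [norm_sub_rev]
  have hne : kcX p r - kcX p s ≠ 0 := sub_ne_zero.2 heq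
  rw [Padic.eq_padicNorm, padicNorm.eq_zpow_of_nonzero hne] at hn
  push_cast at hn
  rw [zpow_le_zpow_iff_right₀ (by exact_mod_cast hp.one_lt)] at hn
  push_cast
  linarith
end

section
/- Let p be an odd prime, a, t nonnegative integers, and k a positive integer not divisible by p-1 with 2p^(2a+2+t) | k and t ≥ 1. Then p^t * B_{(k+p^a(p-1))p^t} ≡ p^(t+1) * B_{(k+p^a(p-1))p^(t-1)} (mod p^(2a+2t+1)), where B_n is the n-th Bernoulli number; equivalently, B_{(k+p^a(p-1))p^t} / ((k+p^a(p-1))p^t) ≡ B_{(k+p^a(p-1))p^(t-1)} / ((k+p^a(p-1))p^(t-1)) (mod p^(a+1)). -/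
lemma aux_voronoi (N c n : ℕ) (hN : 0 < N) (hc : Nat.Coprime c N) :
    ∃ E : ℤ, ((c : ℤ) ^ n - 1) * ∑ j ∈ Finset.range N, (j : ℤ) ^ n =
      n * N * ∑ j ∈ Finset.range N, ((c * j / N : ℕ) : ℤ) * ((c * j % N : ℕ) : ℤ) ^ (n - 1)
        + (N : ℤ) ^ 2 * E := by
  have hperm : ∑ j ∈ Finset.range N, ((c * j % N : ℕ) : ℤ) ^ n
      = ∑ j ∈ Finset.range N, (j : ℤ) ^ n := by
    have hm : Set.MapsTo (fun j => c * j % N) (Finset.range N) (Finset.range N) := by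
      intro j _
      simpa using Nat.mod_lt _ hN
    have hi : Set.InjOn (fun j => c * j % N) (Finset.range N) := by
      intro x hx y hy hxy
      have hx' : x < N := by simpa using hx
      have hy' : y < N := by simpa using hy
      have h1 : c * x ≡ c * y [MOD N] := hxy
      have h2 : x ≡ y [MOD N] := Nat.ModEq.cancel_left_of_coprime hc.symm h1
      exact Nat.ModEq.eq_of_lt_of_lt h2 hx' hy'
    have hs := Finset.surjOn_of_injOn_of_card_le (s := Finset.range N) (t := Finset.range N)
      (fun j => c * j % N) hm hi le_rfl
    exact Finset.sum_nbij (fun j => c * j % N) hm hi hs (fun _ _ => rfl)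
  have key : ∀ j : ℕ, ∃ e : ℤ, (c : ℤ) ^ n * (j : ℤ) ^ n = ((c * j % N : ℕ) : ℤ) ^ n
      + n * N * (((c * j / N : ℕ) : ℤ) * ((c * j % N : ℕ) : ℤ) ^ (n - 1)) + (N : ℤ) ^ 2 * e := by
    intro j
    obtain ⟨e, he⟩ := Polynomial.powAddExpansion ((c * j % N : ℕ) : ℤ)
      ((N : ℤ) * ((c * j / N : ℕ) : ℤ)) n
    refine ⟨e * ((c * j / N : ℕ) : ℤ) ^ 2, ?_⟩
    have h : ((c * j % N : ℕ) : ℤ) + (N : ℤ) * ((c * j / N : ℕ) : ℤ) = c * j := by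
      exact_mod_cast Nat.mod_add_div (c * j) N
    rw [h] at he
    rw [← mul_pow, he]
    ring
  choose e he using key
  refine ⟨∑ j ∈ Finset.range N, e j, ?_⟩
  rw [sub_mul, one_mul, Finset.mul_sum, Finset.sum_congr rfl (fun j _ => he j),
    Finset.sum_add_distrib, Finset.sum_add_distrib, hperm, Finset.mul_sum, Finset.mul_sum]
  ring

lemma aux_tendsto_bernoulli (p : ℕ) [Fact p.Prime] (n : ℕ) :
    Filter.Tendsto (fun m : ℕ => (∑ j ∈ Finset.range (p ^ m), (j : ℚ_[p]) ^ n) / (p : ℚ_[p]) ^ m)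
      Filter.atTop (nhds ((bernoulli n : ℚ) : ℚ_[p])) := by
  have hp0 : (p : ℚ_[p]) ≠ 0 := by exact_mod_cast (Fact.out : p.Prime).ne_zero
  have hpt : Filter.Tendsto (fun m : ℕ => (p : ℚ_[p]) ^ m) Filter.atTop (nhds 0) :=
    tendsto_pow_atTop_nhds_zero_of_norm_lt_one Padic.norm_p_lt_one
  have hform : ∀ m : ℕ, (∑ j ∈ Finset.range (p ^ m), (j : ℚ_[p]) ^ n) / (p : ℚ_[p]) ^ m
      = ∑ i ∈ Finset.range (n + 1), ((bernoulli i * ((n + 1).choose i) / (n + 1) : ℚ) : ℚ_[p])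
        * ((p : ℚ_[p]) ^ m) ^ (n - i) := by
    intro m
    have h := congrArg (fun x : ℚ => (x : ℚ_[p])) (sum_range_pow (p ^ m) n)
    simp only [Rat.cast_sum, Rat.cast_pow, Rat.cast_natCast] at h
    rw [h, Finset.sum_div]
    refine Finset.sum_congr rfl fun i hi => ?_
    have hi' : n + 1 - i = (n - i) + 1 := by
      have := Finset.mem_range.mp hi
      omega
    rw [hi']
    push_cast
    rw [pow_succ ((p : ℚ_[p]) ^ m)]
    have : (p : ℚ_[p]) ^ m ≠ 0 := pow_ne_zero _ hp0
    field_simp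
  simp_rw [hform]
  have hval : ((bernoulli n : ℚ) : ℚ_[p]) = ∑ i ∈ Finset.range (n + 1),
      ((bernoulli i * ((n + 1).choose i) / (n + 1) : ℚ) : ℚ_[p]) * (0 : ℚ_[p]) ^ (n - i) := by
    rw [Finset.sum_range_succ, Finset.sum_eq_zero]
    · have : ((n : ℚ) + 1) ≠ 0 := by positivity
      simp only [Nat.choose_succ_self_right, Nat.sub_self, pow_zero, mul_one, zero_add]
      congr 1
      push_cast
      field_simp
    · intro i hi
      have := Finset.mem_range.mp hi
      rw [zero_pow (by omega), mul_zero]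
  rw [hval]
  exact tendsto_finsetSum _ fun i _ => (hpt.pow (n - i)).const_mul _

def auxT (p c n m : ℕ) : ℤ :=
  ∑ j ∈ Finset.range (p ^ m), ((c * j / p ^ m : ℕ) : ℤ) * ((c * j % p ^ m : ℕ) : ℤ) ^ (n - 1)

lemma aux_tendsto_T (p : ℕ) [Fact p.Prime] (c n : ℕ) (hn : 0 < n) (hc : Nat.Coprime c p) :
    Filter.Tendsto (fun m : ℕ => ((auxT p c n m : ℤ) : ℚ_[p])) Filter.atTop
      (nhds (((c : ℚ_[p]) ^ n - 1) * ((bernoulli n : ℚ) : ℚ_[p]) / n)) := by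
  have hp0 : (p : ℚ_[p]) ≠ 0 := by exact_mod_cast (Fact.out : p.Prime).ne_zero
  have hn0 : (n : ℚ_[p]) ≠ 0 := by exact_mod_cast hn.ne'
  have hpt : Filter.Tendsto (fun m : ℕ => (p : ℚ_[p]) ^ m) Filter.atTop (nhds 0) :=
    tendsto_pow_atTop_nhds_zero_of_norm_lt_one Padic.norm_p_lt_one
  choose E hE using fun m : ℕ => aux_voronoi (p ^ m) c n
    (pow_pos (Fact.out : p.Prime).pos m) (Nat.Coprime.pow_right m hc)
  have hsmall : Filter.Tendsto (fun m : ℕ => (p : ℚ_[p]) ^ m * ((E m : ℤ) : ℚ_[p]))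
      Filter.atTop (nhds 0) := by
    refine squeeze_zero_norm (fun m => ?_) (a := fun m : ℕ => ‖(p : ℚ_[p]) ^ m‖) (by simpa using hpt.norm)
    rw [norm_mul]
    exact mul_le_of_le_one_right (norm_nonneg _) (Padic.norm_int_le_one _)
  have h := ((((aux_tendsto_bernoulli p n).const_mul ((c : ℚ_[p]) ^ n - 1)).sub hsmall).div_const
    (n : ℚ_[p]))
  rw [sub_zero] at h
  refine h.congr fun m => ?_
  have h2 := congrArg (fun x : ℤ => (x : ℚ_[p])) (hE m)
  have hpm : (p : ℚ_[p]) ^ m ≠ 0 := pow_ne_zero _ hp0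
  change _ = (((n : ℤ) * ((p ^ m : ℕ) : ℤ) * auxT p c n m + _ : ℤ) : ℚ_[p]) at h2
  generalize auxT p c n m = T at *
  push_cast at h2
  rw [← mul_div_assoc, h2]
  field_simp
  ring

lemma aux_pow_mod (p r n d : ℕ) (hp : p.Prime) (hr : r ≤ n) (x : ℕ) :
    ((p : ℤ) ^ r) ∣ (x : ℤ) ^ (n + d * Nat.totient (p ^ r)) - (x : ℤ) ^ n := by
  by_cases hx : Nat.Coprime x p
  · have h := Nat.ModEq.pow_totient (Nat.Coprime.pow_right r hx)
    have h3 : x ^ n ≡ x ^ (n + d * Nat.totient (p ^ r)) [MOD p ^ r] := by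
      have := ((h.pow d).mul_left (x ^ n)).symm
      rwa [one_pow, mul_one, ← pow_mul, mul_comm _ d, ← pow_add] at this
    have := (Nat.modEq_iff_dvd.mp h3)
    push_cast at this
    exact this
  · have hpx : p ∣ x := by
      by_contra hcon
      exact hx ((Nat.Prime.coprime_iff_not_dvd hp).mpr hcon).symm
    have hpx' : (p : ℤ) ∣ x := by exact_mod_cast hpx
    refine dvd_sub ?_ ?_
    · exact (pow_dvd_pow _ (by omega)).trans (pow_dvd_pow_of_dvd hpx' _)
    · exact (pow_dvd_pow _ hr).trans (pow_dvd_pow_of_dvd hpx' _)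

lemma aux_exists_c (p n : ℕ) (hp : p.Prime) (hn : ¬ (p - 1) ∣ n) :
    ∃ c : ℕ, Nat.Coprime c p ∧ ¬ ((p : ℤ) ∣ (c : ℤ) ^ n - 1) := by
  have : Fact p.Prime := ⟨hp⟩
  obtain ⟨g, hg⟩ := IsCyclic.exists_generator (α := (ZMod p)ˣ)
  have ho : orderOf g = p - 1 := by
    rw [orderOf_eq_card_of_forall_mem_zpowers hg, Nat.card_eq_fintype_card, ZMod.card_units]
  refine ⟨(g : ZMod p).val, ZMod.val_coe_unit_coprime g, fun hd => hn ?_⟩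
  rw [← ho]
  apply orderOf_dvd_of_pow_eq_one
  have h := (ZMod.intCast_zmod_eq_zero_iff_dvd _ p).mpr hd
  push_cast at h
  rw [ZMod.natCast_zmod_val] at h
  ext
  push_cast
  exact sub_eq_zero.mp h

lemma aux_kummer (p r n d : ℕ) [Fact p.Prime] (hr1 : 1 ≤ r) (hr : r < n) (hn : ¬ (p - 1) ∣ n) :
    ‖(((bernoulli (n + d * Nat.totient (p ^ r)) / ((n + d * Nat.totient (p ^ r) : ℕ) : ℚ)
      - bernoulli n / (n : ℚ) : ℚ)) : ℚ_[p])‖ ≤ (p : ℝ) ^ (-(r : ℤ)) := by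
  have hp : p.Prime := Fact.out
  obtain ⟨c, hc, hcn⟩ := aux_exists_c p n hp hn
  set n' := n + d * Nat.totient (p ^ r) with hn'
  have hn0 : 0 < n := by omega
  have hn0' : 0 < n' := by omega
  have h0 := aux_tendsto_T p c n hn0 hc
  have h1 := aux_tendsto_T p c n' hn0' hc
  have hT : ∀ m, ((p : ℤ) ^ r) ∣ auxT p c n' m - auxT p c n m := by
    intro m
    unfold auxT
    rw [← Finset.sum_sub_distrib]
    refine Finset.dvd_sum fun j _ => ?_
    rw [← mul_sub]
    refine Dvd.dvd.mul_left ?_ _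
    have : n' - 1 = (n - 1) + d * Nat.totient (p ^ r) := by omega
    rw [this]
    exact aux_pow_mod p r (n - 1) d hp (by omega) _
  have hA : ‖((c : ℚ_[p]) ^ n' - 1) * ((bernoulli n' : ℚ) : ℚ_[p]) / n'
      - ((c : ℚ_[p]) ^ n - 1) * ((bernoulli n : ℚ) : ℚ_[p]) / n‖ ≤ (p : ℝ) ^ (-(r : ℤ)) := by
    refine le_of_tendsto (h1.sub h0).norm (Filter.Eventually.of_forall fun m => ?_)
    rw [← Int.cast_sub]
    exact (Padic.norm_int_le_pow_iff_dvd _ _).mpr (by exact_mod_cast hT m)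
  have hA0 : ‖((c : ℚ_[p]) ^ n - 1) * ((bernoulli n : ℚ) : ℚ_[p]) / n‖ ≤ 1 :=
    le_of_tendsto h0.norm (Filter.Eventually.of_forall fun m => Padic.norm_int_le_one _)
  have hu : ‖(c : ℚ_[p]) ^ n' - (c : ℚ_[p]) ^ n‖ ≤ (p : ℝ) ^ (-(r : ℤ)) := by
    have := (Padic.norm_int_le_pow_iff_dvd (p := p) ((c : ℤ) ^ n' - (c : ℤ) ^ n) r).mpr
      (by exact_mod_cast aux_pow_mod p r n d hp hr.le c)
    push_cast at this
    exact this
  have hcn' : ¬ ((p : ℤ) ∣ (c : ℤ) ^ n' - 1) := by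
    intro h
    apply hcn
    have h2 := (dvd_pow_self (p : ℤ) (by omega)).trans (aux_pow_mod p r n d hp hr.le c)
    have h3 := dvd_sub h h2
    have h4 : (c : ℤ) ^ n' - 1 - ((c : ℤ) ^ n' - (c : ℤ) ^ n) = (c : ℤ) ^ n - 1 := by ring
    rwa [hn', ← hn', h4] at h3
  have hunit : ∀ q : ℕ, ¬ ((p : ℤ) ∣ (c : ℤ) ^ q - 1) → ‖(c : ℚ_[p]) ^ q - 1‖ = 1 := by
    intro q hq
    have h := Padic.norm_int_le_one (p := p) ((c : ℤ) ^ q - 1)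
    have h2 : ¬ ‖(((c : ℤ) ^ q - 1 : ℤ) : ℚ_[p])‖ < 1 := by
      rw [Padic.norm_intCast_lt_one_iff]
      exact hq
    push_cast at h h2
    exact le_antisymm h (not_lt.mp h2)
  have hu0 := hunit n hcn
  have hu1 := hunit n' hcn'
  push_cast
  set u := (c : ℚ_[p]) ^ n
  set u' := (c : ℚ_[p]) ^ n'
  generalize ((bernoulli n : ℚ) : ℚ_[p]) = B at *
  generalize ((bernoulli n' : ℚ) : ℚ_[p]) = B' at *
  have hb : ‖B / (n : ℚ_[p])‖ ≤ 1 := by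
    rwa [mul_div_assoc, norm_mul, hu0, one_mul] at hA0
  have e : (u' - 1) * (B' / (n' : ℚ_[p]) - B / (n : ℚ_[p])) =
    ((u' - 1) * B' / n' - (u - 1) * B / n) + (-((u' - u) * (B / n))) := by ring
  have hfin : ‖(u' - 1) * (B' / (n' : ℚ_[p]) - B / (n : ℚ_[p]))‖ ≤ (p : ℝ) ^ (-(r : ℤ)) := by
    rw [e]
    refine (Padic.nonarchimedean _ _).trans (max_le hA ?_)
    rw [norm_neg, norm_mul]
    exact (mul_le_of_le_one_right (norm_nonneg _) hb).trans hu
  rwa [norm_mul, hu1, one_mul] at hfin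

lemma aux_val (p r : ℕ) [Fact p.Prime] (x : ℚ) (hx : x ≠ 0)
    (h : ‖(x : ℚ_[p])‖ ≤ (p : ℝ) ^ (-(r : ℤ))) : (r : ℤ) ≤ padicValRat p x := by
  have hp : p.Prime := Fact.out
  rw [Padic.eq_padicNorm, padicNorm.eq_zpow_of_nonzero hx] at h
  push_cast at h
  have := (zpow_le_zpow_iff_right₀ (by exact_mod_cast hp.one_lt : (1 : ℝ) < p)).mp h
  omega

theorem branching_congruence (p : ℕ) (hp : p.Prime) (hodd : Odd p)
    (a t : ℕ) (ht : 1 ≤ t) (k : ℕ) (hk : 0 < k) (hnd : ¬ (p - 1) ∣ k)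
    (hdvd : 2 * p ^ (2 * a + 2 + t) ∣ k) :
    ((p : ℚ) ^ t * bernoulli ((k + p ^ a * (p - 1)) * p ^ t) =
        (p : ℚ) ^ (t + 1) * bernoulli ((k + p ^ a * (p - 1)) * p ^ (t - 1)) ∨
      ((2 * a + 2 * t + 1 : ℕ) : ℤ) ≤ padicValRat p
        ((p : ℚ) ^ t * bernoulli ((k + p ^ a * (p - 1)) * p ^ t) -
          (p : ℚ) ^ (t + 1) * bernoulli ((k + p ^ a * (p - 1)) * p ^ (t - 1)))) ∧
    (bernoulli ((k + p ^ a * (p - 1)) * p ^ t) / (((k + p ^ a * (p - 1)) * p ^ t : ℕ) : ℚ) =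
        bernoulli ((k + p ^ a * (p - 1)) * p ^ (t - 1)) /
          (((k + p ^ a * (p - 1)) * p ^ (t - 1) : ℕ) : ℚ) ∨
      ((a + 1 : ℕ) : ℤ) ≤ padicValRat p
        (bernoulli ((k + p ^ a * (p - 1)) * p ^ t) / (((k + p ^ a * (p - 1)) * p ^ t : ℕ) : ℚ) -
          bernoulli ((k + p ^ a * (p - 1)) * p ^ (t - 1)) /
            (((k + p ^ a * (p - 1)) * p ^ (t - 1) : ℕ) : ℚ))) := by
  have : Fact p.Prime := ⟨hp⟩
  have hpQ : (p : ℚ) ≠ 0 := by exact_mod_cast hp.ne_zero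
  set M := k + p ^ a * (p - 1) with hM
  obtain ⟨s, rfl⟩ : ∃ s, t = s + 1 := ⟨t - 1, by omega⟩
  rw [Nat.add_sub_cancel]
  have hkM : p ^ (2 * a + 2 + (s + 1)) ≤ k :=
    Nat.le_of_dvd hk ((Dvd.intro_left _ rfl).trans hdvd)
  have hexp : 2 * a + 2 + (s + 1) < p ^ (2 * a + 2 + (s + 1)) := Nat.lt_pow_self hp.one_lt
  have hMpos : 0 < M := by omega
  have hps : 0 < p ^ s := pow_pos hp.pos s
  have hbig : a + 1 < M * p ^ s := by
    have : M ≤ M * p ^ s := Nat.le_mul_of_pos_right _ hps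
    omega
  have haM : p ^ a ∣ M := by
    refine dvd_add ?_ (Dvd.intro _ rfl)
    exact (pow_dvd_pow p (by omega)).trans ((Dvd.intro_left _ rfl).trans hdvd)
  have hndM : ¬ (p - 1) ∣ M * p ^ s := by
    intro h
    apply hnd
    have hco : Nat.Coprime (p - 1) (p ^ s) := by
      apply Nat.Coprime.pow_right
      have h1 := Nat.coprime_self_add_right (m := p - 1) (n := 1)
      rw [Nat.sub_add_cancel hp.one_le] at h1
      exact h1.mpr (Nat.coprime_one_right _)
    have h2 := hco.dvd_of_dvd_mul_right h
    exact (Nat.dvd_add_left (Dvd.intro_left _ rfl)).mp h2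
  obtain ⟨M', hM'⟩ := haM
  have hn1 : M * p ^ (s + 1) = M * p ^ s + (M' * p ^ s) * Nat.totient (p ^ (a + 1)) := by
    rw [Nat.totient_prime_pow_succ hp]
    have : p = (p - 1) + 1 := (Nat.sub_add_cancel hp.one_le).symm
    calc M * p ^ (s + 1) = M * p ^ s * ((p - 1) + 1) := by rw [← this]; ring
      _ = _ := by rw [hM']; ring
  have hK := aux_kummer p (a + 1) (M * p ^ s) (M' * p ^ s) (by omega) hbig hndM
  rw [← hn1] at hK
  have hMQ : (M : ℚ) ≠ 0 := by exact_mod_cast hMpos.ne'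
  have hEq : (p : ℚ) ^ (s + 1) * bernoulli (M * p ^ (s + 1))
      - (p : ℚ) ^ (s + 1 + 1) * bernoulli (M * p ^ s)
      = ((p ^ (a + 2 * (s + 1)) * M' : ℕ) : ℚ) *
        (bernoulli (M * p ^ (s + 1)) / ((M * p ^ (s + 1) : ℕ) : ℚ)
          - bernoulli (M * p ^ s) / ((M * p ^ s : ℕ) : ℚ)) := by
    have hc : ((p ^ (a + 2 * (s + 1)) * M' : ℕ) : ℚ) = (M : ℚ) * (p : ℚ) ^ (2 * (s + 1)) := by
      rw [hM']; push_cast; ring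
    rw [hc]
    push_cast
    field_simp
    ring
  generalize bernoulli (M * p ^ (s + 1)) / ((M * p ^ (s + 1) : ℕ) : ℚ) = b1 at *
  generalize bernoulli (M * p ^ s) / ((M * p ^ s : ℕ) : ℚ) = b0 at *
  refine ⟨?_, ?_⟩
  · rw [← sub_eq_zero, or_iff_not_imp_left]
    intro hne
    refine aux_val p _ _ hne ?_
    rw [hEq]
    push_cast
    push_cast at hK
    rw [norm_mul, norm_mul, norm_pow, Padic.norm_p]
    have hM1 : ‖(M' : ℚ_[p])‖ ≤ 1 := by exact_mod_cast Padic.norm_int_le_one (p := p) (M' : ℤ)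
    have hp0 : (p : ℝ) ≠ 0 := by exact_mod_cast hp.ne_zero
    have hpp : (0 : ℝ) ≤ ((p : ℝ)⁻¹) ^ (a + 2 * (s + 1)) := by positivity
    calc _ ≤ ((p : ℝ)⁻¹) ^ (a + 2 * (s + 1)) * 1 * (p : ℝ) ^ (-((a : ℤ) + 1)) := by gcongr
      _ = _ := by
        rw [mul_one, inv_pow, ← zpow_natCast, ← zpow_neg, ← zpow_add₀ hp0]
        congr 1
        push_cast
        ring
  · rw [← sub_eq_zero, or_iff_not_imp_left]
    intro hne
    exact aux_val p _ _ hne hK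
end
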